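/- Let K be a division ring, Λ a ring, φ : K → Λ a ring homomorphism, and t ∈ Λ an element such that the powers of t are left linearly independent over φ(K); that is, whenever a₀, a₁, …, aₙ ∈ K satisfy φ(a₀) + φ(a₁)·t + ⋯ + φ(aₙ)·tⁿ = 0 in Λ, then a₀ = a₁ = ⋯ = aₙ = 0. Let H be a left Λ-module which, regarded as a K-module via φ, is finitely generated over K. Then every element of H is a Λ-torsion element: for every h ∈ H there exists a nonzero λ ∈ Λ with λ • h = 0. -/

import Mathlib

/-- If `K` is a division ring, `φ : K → Λ` a ring homomorphism, and `t ∈ Λ` has its powers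
left linearly independent over `φ(K)`, then any left `Λ`-module that is finitely generated
over `K` (via `φ`) consists entirely of `Λ`-torsion elements. -/
theorem torsion_of_finitely_generated_over_coefficients
    {K : Type*} [DivisionRing K] {Λ : Type*} [Ring Λ]
    (φ : K →+* Λ) (t : Λ)
    (hindep : ∀ (n : ℕ) (a : Fin (n + 1) → K),
      (∑ i : Fin (n + 1), φ (a i) * t ^ (i : ℕ)) = 0 → ∀ i, a i = 0)
    {H : Type*} [AddCommGroup H] [Module Λ H]
    (hfg : ∃ (n : ℕ) (g : Fin n → H),
      ∀ h : H, ∃ c : Fin n → K, h = ∑ i : Fin n, φ (c i) • g i) :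
    ∀ h : H, ∃ lam : Λ, lam ≠ 0 ∧ lam • h = 0 := by
  intro h
  obtain ⟨n, g, hg⟩ := hfg
  letI : Module K H := Module.compHom H φ
  have hs : ∀ (a : K) (x : H), a • x = φ a • x := fun _ _ => rfl
  have hspan : Submodule.span K (Set.range g) = ⊤ := by
    rw [eq_top_iff]
    intro x _
    obtain ⟨c, hc⟩ := hg x
    rw [hc]
    refine Submodule.sum_mem _ fun i _ => ?_
    rw [← hs]
    exact Submodule.smul_mem _ _ (Submodule.subset_span ⟨i, rfl⟩)
  haveI : Module.Finite K H := ⟨Submodule.fg_def.mpr ⟨_, Set.finite_range g, hspan⟩⟩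
  have hdep : ¬ LinearIndependent K
      (fun i : Fin (Module.finrank K H + 1) => t ^ (i : ℕ) • h) := by
    intro hli
    have := hli.fintype_card_le_finrank
    simp at this
  obtain ⟨a, ha, i, hi⟩ := Fintype.not_linearIndependent_iff.mp hdep
  refine ⟨∑ i, φ (a i) * t ^ (i : ℕ), fun h0 => hi (hindep _ a h0 i), ?_⟩
  rw [Finset.sum_smul, ← ha]
  exact Finset.sum_congr rfl fun j _ => by rw [hs, mul_smul]
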